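/- arXiv:2210.03547 — 2 statements merged into one kernel-verified Lean document; each statement's English description precedes it below -/
import Mathlib

section
/- Let μ be a σ-finite measure on a measurable space 𝒯, let r ≥ 3 be a natural number, let a ≤ c be reals, and let F, f : ℝ × 𝒯 → ℝ be measurable functions such that for every τ, the function x ↦ F(x,τ) has derivative f(x,τ) at every x ∈ [a,c] and F(a,τ) = 0. Let g : 𝒯 → ℝ be measurable and suppose the function (x,τ) ↦ g(τ)·(r−2)·f(x,τ)·F(x,τ)^{r−3} is integrable on [a,c] × 𝒯 with respect to the product of Lebesgue measure and μ. Assume the completeness condition: for any such g, if ∫_𝒯 g(τ)·F(x,τ)^{r−2} dμ(τ) = 0 for all x ∈ [a,c], then g = 0 μ-almost everywhere. Then the family of top-order-statistic densities is complete: if ∫_𝒯 g(τ)·(r−2)·f(x,τ)·F(x,τ)^{r−3} dμ(τ) = 0 for all x ∈ [a,c], it follows that g = 0 μ-almost everywhere. -/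
open MeasureTheory

/-!
For a fixed parameter, `F ^ n` is the distribution function of the maximum of `n` draws from `F`,
and its derivative in `x` is the density of that maximum. Since `F` vanishes at `a`, integrating in
`x` from `a` (Fubini and the fundamental theorem of calculus) shows that a function orthogonal to
all these densities is orthogonal to all the functions `F (x, ·) ^ n`; hence completeness of the
latter family implies completeness of the former.
-/

open Set

section ParametricIntegral

variable {T E : Type*} [MeasurableSpace T] {μ : Measure T} [SFinite μ]
  [NormedAddCommGroup E] [NormedSpace ℝ E] [CompleteSpace E] {a b : ℝ} {G G' : ℝ → T → E}

theorem integral_sub_eq_intervalIntegral_integral_deriv (hab : a ≤ b)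
    (hderiv : ∀ᵐ τ ∂μ, ∀ x ∈ Icc a b, HasDerivWithinAt (G · τ) (G' x τ) (Icc a b) x)
    (hint : Integrable (Function.uncurry G') ((volume.restrict (Icc a b)).prod μ)) :
    ∫ τ, (G b τ - G a τ) ∂μ = ∫ x in a..b, ∫ τ, G' x τ ∂μ := by
  rw [← restrict_Ioc_eq_restrict_Icc] at hint
  have ftc : ∀ᵐ τ ∂μ, G b τ - G a τ = ∫ x in Ioc a b, G' x τ := by
    filter_upwards [hderiv, hint.prod_left_ae] with τ hτ hintτ
    rw [← intervalIntegral.integral_of_le hab]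
    refine Eq.symm <| intervalIntegral.integral_eq_sub_of_hasDerivAt_of_le hab
      (fun x hx => (hτ x hx).continuousWithinAt)
      (fun x hx => (hτ x (Ioo_subset_Icc_self hx)).hasDerivAt (Icc_mem_nhds hx.1 hx.2)) ?_
    exact (intervalIntegrable_iff_integrableOn_Ioc_of_le hab).2 hintτ
  calc ∫ τ, (G b τ - G a τ) ∂μ
      = ∫ τ, (∫ x in Ioc a b, G' x τ) ∂μ := integral_congr_ae ftc
    _ = ∫ x in Ioc a b, ∫ τ, G' x τ ∂μ := (integral_integral_swap hint).symm
    _ = ∫ x in a..b, ∫ τ, G' x τ ∂μ := (intervalIntegral.integral_of_le hab).symm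

theorem integral_eq_zero_of_integral_deriv_eq_zero
    (hderiv : ∀ᵐ τ ∂μ, ∀ x ∈ Icc a b, HasDerivWithinAt (G · τ) (G' x τ) (Icc a b) x)
    (hint : Integrable (Function.uncurry G') ((volume.restrict (Icc a b)).prod μ))
    (hGa : ∀ᵐ τ ∂μ, G a τ = 0) (hzero : ∀ x ∈ Icc a b, ∫ τ, G' x τ ∂μ = 0)
    {x : ℝ} (hx : x ∈ Icc a b) : ∫ τ, G x τ ∂μ = 0 := by
  have hsub : Icc a x ⊆ Icc a b := Icc_subset_Icc_right hx.2
  calc ∫ τ, G x τ ∂μ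
      = ∫ τ, (G x τ - G a τ) ∂μ :=
        integral_congr_ae (hGa.mono fun τ hτ => by simp only [hτ, sub_zero])
    _ = ∫ y in a..x, ∫ τ, G' y τ ∂μ :=
        integral_sub_eq_intervalIntegral_integral_deriv hx.1
          (hderiv.mono fun τ hτ y hy => (hτ y (hsub hy)).mono hsub)
          (hint.mono_measure (Measure.prod_mono (Measure.restrict_mono hsub le_rfl) le_rfl))
    _ = ∫ _ in a..x, (0 : E) :=
        intervalIntegral.integral_congr fun y hy =>
          hzero y (hsub (uIcc_of_le hx.1 ▸ hy))
    _ = 0 := intervalIntegral.integral_zero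

end ParametricIntegral

/-- The density of the maximum of `n` independent draws from a distribution with distribution
function `F` and density `f`. The domain `α` is arbitrary, so that `F` and `f` may also depend on a
parameter. -/
def maxDensity {α : Type*} (n : ℕ) (F f : α → ℝ) (z : α) : ℝ :=
  n * f z * F z ^ (n - 1)

theorem hasDerivWithinAt_pow_maxDensity {F f : ℝ → ℝ} {s : Set ℝ} {x : ℝ} (n : ℕ)
    (h : HasDerivWithinAt F (f x) s x) :
    HasDerivWithinAt (fun u => F u ^ n) (maxDensity n F f x) s x :=
  (h.fun_pow n).congr_deriv (mul_right_comm _ _ _)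

theorem maxDensity_sub_two_mul {α : Type*} {r : ℕ} (hr : 2 ≤ r) (F f : α → ℝ) (z : α) (t : ℝ) :
    maxDensity (r - 2) F f z * t = t * ((r : ℝ) - 2) * f z * F z ^ (r - 3) := by
  rw [maxDensity, Nat.cast_sub hr, Nat.sub_sub]
  push_cast
  ring

/-- Completeness of the family of functions `k x`, `x ∈ s`, with respect to the class `𝒢`: only the
members of `𝒢` that vanish almost everywhere are orthogonal to the whole family. Bochner integrals
of non-integrable functions are `0`, so integrability requirements belong in `𝒢`. -/
def IsCompleteFamily {ι T E : Type*} [MeasurableSpace T] [NormedAddCommGroup E] [NormedSpace ℝ E]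
    (μ : Measure T) (𝒢 : Set (T → E)) (s : Set ι) (k : ι → T → ℝ) : Prop :=
  ∀ g ∈ 𝒢, (∀ x ∈ s, ∫ τ, k x τ • g τ ∂μ = 0) → g =ᵐ[μ] 0

theorem stmt0_general {T E : Type*} [MeasurableSpace T] {μ : Measure T} [SFinite μ]
    [NormedAddCommGroup E] [NormedSpace ℝ E] [CompleteSpace E] {n : ℕ} (hn : n ≠ 0) {a c : ℝ}
    {F f : ℝ × T → ℝ} {𝒢 : Set (T → E)}
    (hderiv : ∀ᵐ τ ∂μ, ∀ x ∈ Icc a c,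
      HasDerivWithinAt (fun u => F (u, τ)) (f (x, τ)) (Icc a c) x)
    (hFa : ∀ᵐ τ ∂μ, F (a, τ) = 0)
    (hint : ∀ g ∈ 𝒢, Integrable (fun q : ℝ × T => maxDensity n F f q • g q.2)
      ((volume.restrict (Icc a c)).prod μ))
    (hcomplete : IsCompleteFamily μ 𝒢 (Icc a c) fun x τ => F (x, τ) ^ n) :
    IsCompleteFamily μ 𝒢 (Icc a c) fun x τ => maxDensity n F f (x, τ) := by
  intro g hg hzero
  refine hcomplete g hg fun x hx =>
    integral_eq_zero_of_integral_deriv_eq_zero (G := fun x τ => F (x, τ) ^ n • g τ)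
      (G' := fun x τ => maxDensity n F f (x, τ) • g τ) ?_ (hint g hg) ?_ hzero hx
  · filter_upwards [hderiv] with τ hτ y hy
    exact (hasDerivWithinAt_pow_maxDensity (f := fun u => f (u, τ)) n (hτ y hy)).smul_const (g τ)
  · filter_upwards [hFa] with τ hτ
    rw [hτ, zero_pow hn, zero_smul]

/-- Completeness of the family of top-order-statistic densities, derived from
completeness of the family `{F(·,τ)^(r-2)}`. -/
theorem stmt0 {𝒯 : Type*} [MeasurableSpace 𝒯] (μ : Measure 𝒯) [SigmaFinite μ]
    (r : ℕ) (hr : 3 ≤ r) (a c : ℝ) (hac : a ≤ c)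
    (F f : ℝ × 𝒯 → ℝ) (hFmeas : Measurable F) (hfmeas : Measurable f)
    (hderiv : ∀ τ : 𝒯, ∀ x ∈ Set.Icc a c, HasDerivAt (fun u => F (u, τ)) (f (x, τ)) x)
    (hFa : ∀ τ : 𝒯, F (a, τ) = 0)
    (hcomplete : ∀ g : 𝒯 → ℝ, Measurable g →
      Integrable (fun q : ℝ × 𝒯 =>
        g q.2 * ((r : ℝ) - 2) * f (q.1, q.2) * F (q.1, q.2) ^ (r - 3))
        ((volume.restrict (Set.Icc a c)).prod μ) →
      (∀ x ∈ Set.Icc a c, ∫ τ, g τ * F (x, τ) ^ (r - 2) ∂μ = 0) →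
      g =ᵐ[μ] 0)
    (g : 𝒯 → ℝ) (hg : Measurable g)
    (hint : Integrable (fun q : ℝ × 𝒯 =>
      g q.2 * ((r : ℝ) - 2) * f (q.1, q.2) * F (q.1, q.2) ^ (r - 3))
      ((volume.restrict (Set.Icc a c)).prod μ))
    (hzero : ∀ x ∈ Set.Icc a c,
      ∫ τ, g τ * ((r : ℝ) - 2) * f (x, τ) * F (x, τ) ^ (r - 3) ∂μ = 0) :
    g =ᵐ[μ] 0 := by
  simp only [← maxDensity_sub_two_mul (by omega : 2 ≤ r), mul_comm (_ : ℝ) (F _ ^ (r - 2))]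
    at hcomplete hint hzero
  exact stmt0_general (𝒢 := {g | Measurable g ∧ Integrable _ _}) (by omega)
    (.of_forall fun τ x hx => (hderiv τ x hx).hasDerivWithinAt) (.of_forall hFa) (fun _ h => h.2)
    (fun g h => hcomplete g h.1 h.2) g ⟨hg, hint⟩ hzero
end

section
/- Let μ be a finite (e.g., probability or Lebesgue-type) measure on ℝ, and let q₁, q₂ : ℝ → ℝ be monotone nondecreasing functions. If the pushforward measures satisfy μ ∘ q₁⁻¹ = μ ∘ q₂⁻¹ (i.e., Measure.map q₁ μ = Measure.map q₂ μ), then q₁ = q₂ μ-almost everywhere. -/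
open MeasureTheory

/-!
The sublevel sets of two monotone functions are lower sets of a linear order, so for each threshold
they are nested; having the same finite measure, they then differ by a null set. Countably many
thresholds suffice to separate values, so the functions agree off a countable union of null sets.
-/

open ProbabilityTheory Set
open scoped ENNReal

section MonotoneIdentDistrib

variable {α β : Type*} [LinearOrder α] [MeasurableSpace α] {μ : Measure α}

theorem ae_eq_of_isLowerSet_of_measure_eq {s t : Set α} (hs : IsLowerSet s) (ht : IsLowerSet t)
    (hsm : NullMeasurableSet s μ) (htm : NullMeasurableSet t μ) (hst : μ s = μ t)
    (hfin : μ s ≠ ∞) : s =ᵐ[μ] t := by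
  rcases hs.total ht with hsub | hsub
  · exact ae_eq_of_subset_of_measure_ge hsub hst.ge hsm (hst ▸ hfin)
  · exact (ae_eq_of_subset_of_measure_ge hsub hst.le htm hfin).symm

variable [TopologicalSpace β] [MeasurableSpace β] [OpensMeasurableSpace β] {f g : α → β}

theorem ae_le_iff_le_of_monotone_of_identDistrib [Preorder β] [ClosedIicTopology β]
    (hf : Monotone f) (hg : Monotone g) (h : IdentDistrib f g μ μ) {b : β}
    (hfin : μ (f ⁻¹' Iic b) ≠ ∞) : ∀ᵐ x ∂μ, f x ≤ b ↔ g x ≤ b :=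
  have sublevel_ae_eq : f ⁻¹' Iic b =ᵐ[μ] g ⁻¹' Iic b :=
    ae_eq_of_isLowerSet_of_measure_eq
      ((isLowerSet_Iic b).preimage hf) ((isLowerSet_Iic b).preimage hg)
      (h.aemeasurable_fst.nullMeasurableSet_preimage measurableSet_Iic)
      (h.aemeasurable_snd.nullMeasurableSet_preimage measurableSet_Iic)
      (h.measure_mem_eq measurableSet_Iic) hfin
  sublevel_ae_eq.mem_iff

theorem stmt14_general [LinearOrder β] [OrderTopology β] [SecondCountableTopology β]
    (hf : Monotone f) (hg : Monotone g) (h : IdentDistrib f g μ μ)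
    (hfin : ∀ b, μ (f ⁻¹' Iic b) ≠ ∞) : f =ᵐ[μ] g :=
  .of_forall_eventually_le_iff fun b ↦ ae_le_iff_le_of_monotone_of_identDistrib hf hg h (hfin b)

end MonotoneIdentDistrib

/-- A monotone nondecreasing function is determined `μ`-almost everywhere by its
distribution (pushforward) under `μ`. -/
theorem stmt14 (μ : Measure ℝ) [IsFiniteMeasure μ] (q₁ q₂ : ℝ → ℝ)
    (h₁ : Monotone q₁) (h₂ : Monotone q₂)
    (h : Measure.map q₁ μ = Measure.map q₂ μ) :
    q₁ =ᵐ[μ] q₂ :=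
  stmt14_general h₁ h₂ ⟨h₁.measurable.aemeasurable, h₂.measurable.aemeasurable, h⟩
    fun _ ↦ measure_ne_top μ _
end
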